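/- arXiv:2509.06492 — 8 statements merged into one kernel-verified Lean document; each statement's English description precedes it below -/
import Mathlib

section
/- Let f ∈ F[X] with deg f ≤ q^t−2 be such that f(α) ∈ B for every α ∈ F. Then for every i ∈ {0,1,…,q^t−2}, the coefficient of X^{(i·q mod (q^t−1))} in f equals the q-th power of the coefficient of X^i in f. -/
/-!
Discrete Fourier inversion recovers the coefficients of `f` from its values at the powers of a
primitive `n`-th root of unity `ζ`: if `n ∣ i + l`, then `∑ⱼ f(ζʲ) ζʲˡ = n cᵢ`. Apply an
endomorphism `φ` that fixes these values and sends `ζ` to `ζᵏ`. The left side becomes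
`∑ⱼ f(ζʲ) ζʲᵏˡ`, the inversion sum for the exponent `ik mod n`, hence `n φ(cᵢ) = n c_{ik mod n}`.
For the extension `F / B`, take `ζ` to be a generator of `Fˣ` and `φ` the Frobenius `x ↦ x ^ q`,
which fixes `B`.
-/

open Finset Polynomial

section PrimitiveRoot

variable {R : Type*} [CommRing R] [IsDomain R] {ζ : R} {n : ℕ}

theorem geom_sum_primitiveRoot_pow (hζ : IsPrimitiveRoot ζ n) (m : ℕ) :
    ∑ j ∈ range n, (ζ ^ m) ^ j = if n ∣ m then (n : R) else 0 := by
  split_ifs with hdvd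
  · simp [(hζ.pow_eq_one_iff_dvd m).2 hdvd]
  · have hne : ζ ^ m - 1 ≠ 0 := sub_ne_zero.2 fun h ↦ hdvd (hζ.dvd_of_pow_eq_one m h)
    refine (mul_eq_zero.1 ?_).resolve_left hne
    rw [mul_geom_sum, pow_right_comm, hζ.pow_eq_one, one_pow, sub_self]

theorem sum_eval_primitiveRoot_pow_mul_pow (hζ : IsPrimitiveRoot ζ n) {f : R[X]}
    (hf : f.natDegree < n) {i l : ℕ} (hi : i < n) (hil : n ∣ i + l) :
    ∑ j ∈ range n, f.eval (ζ ^ j) * (ζ ^ j) ^ l = n * f.coeff i := by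
  have hdvd_iff : ∀ a ∈ range n, n ∣ a + l ↔ i = a := fun a ha ↦ by
    refine ⟨fun hal ↦ ?_, fun h ↦ h ▸ hil⟩
    have hmod : i + l ≡ a + l [MOD n] :=
      hil.modEq_zero_nat.trans hal.modEq_zero_nat.symm
    exact (Nat.ModEq.add_right_cancel' l hmod).eq_of_lt_of_lt hi (mem_range.1 ha)
  calc ∑ j ∈ range n, f.eval (ζ ^ j) * (ζ ^ j) ^ l
      = ∑ j ∈ range n, ∑ a ∈ range n, f.coeff a * (ζ ^ (a + l)) ^ j := by
        refine sum_congr rfl fun j _ ↦ ?_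
        rw [eval_eq_sum_range' hf, sum_mul]
        exact sum_congr rfl fun a _ ↦ by ring
    _ = ∑ a ∈ range n, f.coeff a * ∑ j ∈ range n, (ζ ^ (a + l)) ^ j := by
        rw [sum_comm]
        simp only [mul_sum]
    _ = ∑ a ∈ range n, if i = a then f.coeff a * n else 0 := by
        refine sum_congr rfl fun a ha ↦ ?_
        simp only [geom_sum_primitiveRoot_pow hζ, hdvd_iff a ha, mul_ite, mul_zero]
    _ = n * f.coeff i := by
        rw [sum_ite_eq, if_pos (mem_range.2 hi), mul_comm]

theorem stmt_2_general (hζ : IsPrimitiveRoot ζ n) {f : R[X]} (hf : f.natDegree < n)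
    (φ : R →+* R) {k : ℕ} (hφζ : φ ζ = ζ ^ k)
    (hval : ∀ j < n, φ (f.eval (ζ ^ j)) = f.eval (ζ ^ j)) {i : ℕ} (hi : i < n) :
    f.coeff (i * k % n) = φ (f.coeff i) := by
  have : NeZero n := ⟨Nat.ne_zero_of_lt hi⟩
  have : NeZero (n : R) := hζ.neZero'
  have hil : n ∣ i + (n - i) := by rw [Nat.add_sub_cancel' hi.le]
  have hikl : n ∣ i * k % n + k * (n - i) := by
    rw [Nat.dvd_iff_mod_eq_zero, Nat.mod_add_mod, mul_comm i, ← mul_add,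
      ← Nat.dvd_iff_mod_eq_zero]
    exact hil.mul_left k
  refine mul_left_cancel₀ (NeZero.ne (n : R)) ?_
  calc n * f.coeff (i * k % n)
      = ∑ j ∈ range n, f.eval (ζ ^ j) * (ζ ^ j) ^ (k * (n - i)) :=
        (sum_eval_primitiveRoot_pow_mul_pow hζ hf (Nat.mod_lt _ (NeZero.pos n)) hikl).symm
    _ = φ (∑ j ∈ range n, f.eval (ζ ^ j) * (ζ ^ j) ^ (n - i)) := by
        rw [map_sum]
        refine sum_congr rfl fun j hj ↦ ?_
        rw [map_mul, hval j (mem_range.1 hj), map_pow, map_pow, hφζ, pow_mul, pow_right_comm ζ j]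
    _ = n * φ (f.coeff i) := by
        rw [sum_eval_primitiveRoot_pow_mul_pow hζ hf hi hil, map_mul, map_natCast]

end PrimitiveRoot

theorem exists_isPrimitiveRoot_card_sub_one (K : Type*) [Field K] [Fintype K] :
    ∃ ζ : K, IsPrimitiveRoot ζ (Fintype.card K - 1) := by
  obtain ⟨u, hu⟩ := IsCyclic.exists_ofOrder_eq_natCard (α := Kˣ)
  rw [Nat.card_units, Nat.card_eq_fintype_card] at hu
  exact ⟨u, IsPrimitiveRoot.coe_units_iff.2 (hu ▸ IsPrimitiveRoot.orderOf u)⟩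

theorem coeff_mul_card_mod_card_sub_one (B : Type*) {F : Type*} [Field B] [Fintype B] [Field F]
    [Fintype F] [Algebra B F] {f : F[X]} (hf : f.natDegree < Fintype.card F - 1)
    (hval : ∀ α : F, α ≠ 0 → f.eval α ∈ Set.range (algebraMap B F))
    {i : ℕ} (hi : i < Fintype.card F - 1) :
    f.coeff (i * Fintype.card B % (Fintype.card F - 1)) = f.coeff i ^ Fintype.card B := by
  obtain ⟨ζ, hζ⟩ := exists_isPrimitiveRoot_card_sub_one F
  let φ := FiniteField.frobeniusAlgHom B F
  have hφ_val (j : ℕ) : φ (f.eval (ζ ^ j)) = f.eval (ζ ^ j) := by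
    obtain ⟨b, hb⟩ := hval (ζ ^ j) (pow_ne_zero j (hζ.ne_zero (Nat.ne_zero_of_lt hi)))
    rw [← hb, φ.commutes]
  exact stmt_2_general hζ hf φ.toRingHom rfl (fun j _ ↦ hφ_val j) hi

theorem stmt_2 (q t : ℕ) (hq : ∃ p m : ℕ, p.Prime ∧ 0 < m ∧ q = p ^ m) (ht : 1 ≤ t)
    (B F : Type) [Field B] [Fintype B] [Field F] [Fintype F] [Algebra B F]
    (hB : Fintype.card B = q) (hrank : Module.finrank B F = t)
    (hF : Fintype.card F = q ^ t)
    (f : Polynomial F) (hdeg : f.natDegree ≤ q ^ t - 2)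
    (hval : ∀ α : F, f.eval α ∈ Set.range (algebraMap B F)) :
    ∀ i : ℕ, i ≤ q ^ t - 2 →
      f.coeff (i * q % (q ^ t - 1)) = (f.coeff i) ^ q := by
  intro i hi
  have hcard : 1 < Fintype.card F := Fintype.one_lt_card
  rw [← hF] at hdeg hi ⊢
  rw [← hB]
  exact coeff_mul_card_mod_card_sub_one B (by omega) (fun α _ ↦ hval α) (by omega)
end

section
/- Fix k with 2 ≤ k ≤ q^t−2. Let f ∈ F[X] with deg f ≤ q^t−k, with the coefficients of X^0 and X^1 in f both equal to 0, and such that f(α) ∈ B for every α ∈ F. Then for every index i with nonzero coefficient in f, the entire cyclotomic coset of i modulo q^t−1 is contained in {2,3,…,q^t−k}, and moreover the coefficient of X^{(i·q mod (q^t−1))} in f equals the q-th power of the coefficient of X^i in f. -/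
/-- The cyclotomic coset of `i` modulo `q^t - 1` (with respect to `q`):
the orbit `{i * q^j mod (q^t - 1) : j ≥ 0}`. -/
def cycCoset (q t i : ℕ) : Set ℕ := {b : ℕ | ∃ j : ℕ, b = i * q ^ j % (q ^ t - 1)}

/-! On the cyclic group `Fˣ` of order `N = |F| - 1`, a polynomial of degree less than `N` is a
Fourier sum, so its coefficients are the Fourier coefficients `f_i = -∑ x : Fˣ, f(x) x⁻ⁱ`
(as `1 / N = -1` in `F`). The Frobenius `y ↦ y ^ q` with `q = |B|` fixes the values `f(x) ∈ B`
and turns `x⁻ⁱ` into `x^(-iq)`, hence `f_i ^ q = f_(iq mod N)`. In particular the support of `f`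
is a union of cyclotomic cosets. -/

open Polynomial Fintype

section Fourier

variable {F : Type*} [Field F] [Fintype F] [DecidableEq F]

theorem sum_units_pow_mul_inv_pow (j i : ℕ) :
    ∑ x : Fˣ, (x : F) ^ j * (x⁻¹ : F) ^ i = if j ≡ i [MOD card F - 1] then -1 else 0 := by
  set N := card F - 1
  have hN : N ≠ 0 := (Nat.sub_pos_of_lt one_lt_card).ne'
  have inv_eq_pow (x : Fˣ) : (x⁻¹ : F) = (x : F) ^ (N - 1) :=
    inv_eq_of_mul_eq_one_left <| by
      rw [pow_sub_one_mul hN, FiniteField.pow_card_sub_one_eq_one _ x.ne_zero]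
  have modEq_iff_dvd : j ≡ i [MOD N] ↔ N ∣ j + (N - 1) * i := by
    have hsum : j + (N - 1) * i + i = j + N * i := by
      rw [add_assoc, ← Nat.add_one_mul, Nat.sub_one_add_one hN]
    rw [← Nat.modEq_zero_iff_dvd, ← (Nat.ModEq.refl i).add_iff_right (a := j + (N - 1) * i), hsum]
    simp [Nat.ModEq]
  simp only [inv_eq_pow, ← pow_mul, ← pow_add, FiniteField.sum_pow_units, modEq_iff_dvd, N]

theorem coeff_eq_neg_sum_units_eval_mul {f : F[X]} (hf : f.natDegree < card F - 1) {i : ℕ}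
    (hi : i < card F - 1) : f.coeff i = -∑ x : Fˣ, f.eval (x : F) * (x⁻¹ : F) ^ i := by
  have sum_eq : ∑ x : Fˣ, f.eval (x : F) * (x⁻¹ : F) ^ i = -f.coeff i :=
    calc
      _ = ∑ x : Fˣ, ∑ j ∈ Finset.range (card F - 1), f.coeff j * ((x : F) ^ j * (x⁻¹ : F) ^ i) := by
        simp only [eval_eq_sum_range' hf, Finset.sum_mul, mul_assoc]
      _ = ∑ j ∈ Finset.range (card F - 1), f.coeff j * if j = i then -1 else 0 := by
        rw [Finset.sum_comm]
        refine Finset.sum_congr rfl fun j hj ↦ ?_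
        have modEq_iff : j ≡ i [MOD card F - 1] ↔ j = i :=
          ⟨fun h ↦ h.eq_of_lt_of_lt (Finset.mem_range.mp hj) hi, fun h ↦ h ▸ rfl⟩
        simp only [← Finset.mul_sum, sum_units_pow_mul_inv_pow, modEq_iff]
      _ = -f.coeff i := by simp [hi]
  rw [sum_eq, neg_neg]

end Fourier

section SubfieldValued

variable {B F : Type*} [Field B] [Fintype B] [Field F] [Fintype F] [Algebra B F]

theorem coeff_mul_card_mod {f : F[X]} (hf : f.natDegree < card F - 1)
    (hval : ∀ x : Fˣ, f.eval (x : F) ∈ Set.range (algebraMap B F)) {i : ℕ} (hi : i < card F - 1) :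
    f.coeff (i * card B % (card F - 1)) = f.coeff i ^ card B := by
  classical
  set N := card F - 1
  have eval_pow (x : Fˣ) : f.eval (x : F) ^ card B = f.eval (x : F) := by
    obtain ⟨b, hb⟩ := hval x
    rw [← hb, ← map_pow, FiniteField.pow_card]
  have inv_pow_mod (x : Fˣ) : (x⁻¹ : F) ^ (i * card B % N) = ((x⁻¹ : F) ^ i) ^ card B := by
    rw [← pow_eq_pow_mod _ (FiniteField.pow_card_sub_one_eq_one _ (inv_ne_zero x.ne_zero)), pow_mul]
  calc
    f.coeff (i * card B % N)
      = -∑ x : Fˣ, f.eval (x : F) * (x⁻¹ : F) ^ (i * card B % N) :=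
        coeff_eq_neg_sum_units_eval_mul hf (Nat.mod_lt _ (Nat.zero_lt_of_lt hi))
    _ = -∑ x : Fˣ, (f.eval (x : F) * (x⁻¹ : F) ^ i) ^ card B := by
        simp only [mul_pow, eval_pow, inv_pow_mod]
    _ = (-∑ x : Fˣ, f.eval (x : F) * (x⁻¹ : F) ^ i) ^ card B := by
        simp only [← FiniteField.frobeniusAlgHom_apply B F, map_neg, map_sum]
    _ = f.coeff i ^ card B := by rw [← coeff_eq_neg_sum_units_eval_mul hf hi]

theorem coeff_mul_card_pow_mod {f : F[X]} (hf : f.natDegree < card F - 1)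
    (hval : ∀ x : Fˣ, f.eval (x : F) ∈ Set.range (algebraMap B F)) {i : ℕ} (hi : i < card F - 1)
    (j : ℕ) : f.coeff (i * card B ^ j % (card F - 1)) = f.coeff i ^ card B ^ j := by
  induction j with
  | zero => simp [Nat.mod_eq_of_lt hi]
  | succ j ih =>
    have h := coeff_mul_card_mod hf hval (Nat.mod_lt (i * card B ^ j) (Nat.zero_lt_of_lt hi))
    rwa [Nat.mod_mul_mod, mul_assoc, ← pow_succ, ih, ← pow_mul, ← pow_succ] at h

theorem coeff_ne_zero_of_mem_cycCoset {t : ℕ} (hF : card F = card B ^ t) {f : F[X]}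
    (hf : f.natDegree < card F - 1)
    (hval : ∀ x : Fˣ, f.eval (x : F) ∈ Set.range (algebraMap B F)) {i b : ℕ}
    (hi : f.coeff i ≠ 0) (hb : b ∈ cycCoset (card B) t i) : f.coeff b ≠ 0 := by
  obtain ⟨j, rfl⟩ := hb
  rw [← hF, coeff_mul_card_pow_mod hf hval ((le_natDegree_of_ne_zero hi).trans_lt hf)]
  exact pow_ne_zero _ hi

end SubfieldValued

theorem stmt_3 (q t k : ℕ) (hq : ∃ p m : ℕ, p.Prime ∧ 0 < m ∧ q = p ^ m) (ht : 1 ≤ t)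
    (hk2 : 2 ≤ k) (hk : k ≤ q ^ t - 2)
    (B F : Type) [Field B] [Fintype B] [Field F] [Fintype F] [Algebra B F]
    (hB : Fintype.card B = q) (hrank : Module.finrank B F = t)
    (hF : Fintype.card F = q ^ t)
    (f : Polynomial F) (hdeg : f.natDegree ≤ q ^ t - k)
    (hc0 : f.coeff 0 = 0) (hc1 : f.coeff 1 = 0)
    (hval : ∀ α : F, f.eval α ∈ Set.range (algebraMap B F)) :
    ∀ i : ℕ, f.coeff i ≠ 0 →
      cycCoset q t i ⊆ Set.Icc 2 (q ^ t - k) ∧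
      f.coeff (i * q % (q ^ t - 1)) = (f.coeff i) ^ q := by
  subst hB
  intro i hi
  have hf : f.natDegree < card F - 1 := by omega
  have hval_units (x : Fˣ) := hval x
  refine ⟨fun b hb ↦ ?_, ?_⟩
  · have hb_ne : f.coeff b ≠ 0 := coeff_ne_zero_of_mem_cycCoset hF hf hval_units hi hb
    have hb_two : 2 ≤ b := (Nat.two_le_iff b).mpr
      ⟨fun h ↦ hb_ne (h ▸ hc0), fun h ↦ hb_ne (h ▸ hc1)⟩
    exact ⟨hb_two, (le_natDegree_of_ne_zero hb_ne).trans hdeg⟩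
  · rw [← hF]
    exact coeff_mul_card_mod hf hval_units ((le_natDegree_of_ne_zero hi).trans_lt hf)
end

section
/- Let C be a cyclotomic coset modulo q^t−1 of size s with representative a. Then the polynomials T_0^C, T_1^C, …, T_{s−1}^C are linearly independent over B in F[X]. -/
/-- The polynomial `T_ℓ^C(X) = Σ_{j=0}^{s-1} ω^{ℓ q^j} X^{a q^j mod (q^t - 1)}`,
for a cyclotomic coset `C` of size `s` with representative `a`. -/
noncomputable def Tpoly (F : Type) [Field F] (q t : ℕ) (ω : F) (a s ℓ : ℕ) : Polynomial F :=
  ∑ j ∈ Finset.range s, Polynomial.C (ω ^ (ℓ * q ^ j)) * Polynomial.X ^ (a * q ^ j % (q ^ t - 1))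

/-!
`X ^ (a % (q ^ t - 1))` occurs in `T_ℓ` only through the summand `j = 0`: if `a * q ^ j` were
congruent to `a` for some `0 < j < s`, the coset would have at most `j` elements. Taking this
coefficient is a `B`-linear map sending `T_ℓ` to `ω ^ ℓ`, and `1, ω, …, ω ^ (s - 1)` are linearly
independent over `B` because `s ≤ t` and `ω` has degree `t` over `B`.
-/

theorem ncard_range_le_of_periodic {α : Type*} {f : ℕ → α} {c : ℕ} (hf : Function.Periodic f c)
    (hc : 0 < c) : (Set.range f).ncard ≤ c := by
  have hrange : Set.range f ⊆ f '' Set.Iio c := by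
    rintro _ ⟨i, rfl⟩
    exact ⟨i % c, Nat.mod_lt i hc, hf.map_mod_nat i⟩
  calc (Set.range f).ncard
      ≤ (f '' Set.Iio c).ncard := Set.ncard_le_ncard hrange ((Set.finite_Iio c).image f)
    _ ≤ (Set.Iio c).ncard := Set.ncard_image_le (Set.finite_Iio c)
    _ = c := by simp

section CyclotomicCoset

variable {q t a j : ℕ}

theorem ncard_cycCoset_le_of_modEq (hj : 0 < j) (h : a * q ^ j ≡ a [MOD q ^ t - 1]) :
    (cycCoset q t a).ncard ≤ j := by
  have hrange : cycCoset q t a = Set.range fun i => a * q ^ i % (q ^ t - 1) := by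
    ext b
    simp only [cycCoset, Set.mem_ofPred_eq, Set.mem_range, eq_comm]
  rw [hrange]
  refine ncard_range_le_of_periodic (fun i => ?_) hj
  calc a * q ^ (i + j) % (q ^ t - 1)
      = a * q ^ j * q ^ i % (q ^ t - 1) := by rw [add_comm i j, pow_add, mul_assoc]
    _ = a * q ^ i % (q ^ t - 1) := h.mul_right (q ^ i)

theorem ncard_cycCoset_le (hq : 0 < q) (ht : 0 < t) : (cycCoset q t a).ncard ≤ t := by
  have hone : q ^ t ≡ 1 [MOD q ^ t - 1] :=
    ((Nat.modEq_iff_dvd' (Nat.one_le_pow t q hq)).2 dvd_rfl).symm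
  exact ncard_cycCoset_le_of_modEq ht (by simpa only [mul_one] using hone.mul_left a)

end CyclotomicCoset

section Tpoly

variable {F : Type} [Field F] {q t a s : ℕ} {ω : F}

theorem coeff_Tpoly (ℓ : ℕ) (hs : 0 < s) (hcard : s ≤ (cycCoset q t a).ncard) :
    (Tpoly F q t ω a s ℓ).coeff (a % (q ^ t - 1)) = ω ^ ℓ := by
  have hne : ∀ j < s, j ≠ 0 → a % (q ^ t - 1) ≠ a * q ^ j % (q ^ t - 1) := fun j hj hj0 h =>
    (hj.trans_le hcard).not_ge (ncard_cycCoset_le_of_modEq (Nat.pos_of_ne_zero hj0) h.symm)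
  simp only [Tpoly, Polynomial.finsetSum_coeff, Polynomial.coeff_C_mul, Polynomial.coeff_X_pow]
  rw [Finset.sum_eq_single_of_mem 0 (Finset.mem_range.2 hs)]
  · simp
  · intro j hj hj0
    rw [if_neg (hne j (Finset.mem_range.1 hj) hj0), mul_zero]

theorem linearIndependent_Tpoly {B : Type*} [CommSemiring B] [Algebra B F]
    (hcard : s ≤ (cycCoset q t a).ncard)
    (hω : LinearIndependent B fun ℓ : Fin s => ω ^ (ℓ : ℕ)) :
    LinearIndependent B fun ℓ : Fin s => Tpoly F q t ω a s ℓ := by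
  refine .of_comp ((Polynomial.lcoeff F (a % (q ^ t - 1))).restrictScalars B) ?_
  convert hω using 1
  funext ℓ
  exact coeff_Tpoly ℓ ℓ.pos hcard

end Tpoly

theorem natDegree_minpoly_eq_finrank_of_forall_eq_pow {K L : Type*} [Field K] [Field L]
    [Algebra K L] [FiniteDimensional K L] {x : L} (hx : ∀ y : L, y ≠ 0 → ∃ j : ℕ, y = x ^ j) :
    (minpoly K x).natDegree = Module.finrank K L := by
  rw [← Field.primitive_element_iff_minpoly_natDegree_eq, eq_top_iff]
  intro y _
  by_cases hy : y = 0
  · exact hy ▸ zero_mem _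
  · obtain ⟨j, rfl⟩ := hx y hy
    exact pow_mem (IntermediateField.mem_adjoin_simple_self K x) j

theorem stmt_5_general (q t : ℕ) (hq : 0 < q) (ht : 1 ≤ t)
    (B : Type*) (F : Type) [Field B] [Field F] [Algebra B F]
    (ω : F) (hω : (minpoly B ω).natDegree = t)
    (a s : ℕ) (hs : (cycCoset q t a).ncard = s) :
    LinearIndependent B (fun ℓ : Fin s => Tpoly F q t ω a s (ℓ : ℕ)) := by
  have hdeg : s ≤ (minpoly B ω).natDegree := by
    rw [← hs, hω]
    exact ncard_cycCoset_le hq ht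
  exact linearIndependent_Tpoly hs.ge
    ((linearIndependent_pow ω).comp (Fin.castLE hdeg) (Fin.castLE_injective hdeg))

theorem stmt_5 (q t : ℕ) (hq : ∃ p m : ℕ, p.Prime ∧ 0 < m ∧ q = p ^ m) (ht : 1 ≤ t)
    (B F : Type) [Field B] [Fintype B] [Field F] [Fintype F] [Algebra B F]
    (hB : Fintype.card B = q) (hrank : Module.finrank B F = t)
    (hF : Fintype.card F = q ^ t)
    (ω : F) (hω : ∀ x : F, x ≠ 0 → ∃ j : ℕ, x = ω ^ j)
    (a s : ℕ) (ha : a ≤ q ^ t - 2) (hs : (cycCoset q t a).ncard = s) :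
    LinearIndependent B (fun ℓ : Fin s => Tpoly F q t ω a s (ℓ : ℕ)) := by
  obtain ⟨p, m, hp, -, rfl⟩ := hq
  exact stmt_5_general (p ^ m) t (pow_pos hp.pos m) ht B F ω
    ((natDegree_minpoly_eq_finrank_of_forall_eq_pow hω).trans hrank) a s hs
end

section
/- Let C be a cyclotomic coset modulo q^t−1 of size s with representative a. Then for every c ∈ F, the polynomial Σ_{j=0}^{s−1} c^{q^j} · X^{(a·q^j mod (q^t−1))} lies in the B-span of {T_ℓ^C : 0 ≤ ℓ ≤ t−1} in F[X]. -/
/-!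
Over a finite field `B` with `q` elements the map `c ↦ ∑ j, c ^ q ^ j * X ^ e j` is `B`-linear,
because each `c ↦ c ^ q ^ j` is an iterate of the Frobenius. It sends `ω ^ ℓ` to `T_ℓ`, and the
powers of `ω` below the degree of its minimal polynomial span `B[ω]`, which is all of `F` when `ω`
is primitive.
-/

theorem mem_adjoin_singleton_of_forall_ne_zero_eq_pow {R A : Type*} [CommSemiring R] [Semiring A]
    [Algebra R A] {ω : A} (hω : ∀ x : A, x ≠ 0 → ∃ j : ℕ, x = ω ^ j) (c : A) :
    c ∈ Algebra.adjoin R {ω} := by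
  by_cases hc : c = 0
  · exact hc ▸ zero_mem _
  · obtain ⟨k, rfl⟩ := hω c hc
    exact pow_mem (Algebra.self_mem_adjoin_singleton R ω) k

section FrobeniusSum

open Polynomial Submodule

variable {B A : Type*} [Field B] [Fintype B] [CommRing A] [Algebra B A]

variable (B A) in
/-- The linear map `c ↦ ∑ j ∈ s, c ^ q ^ j * X ^ e j` with `q = #B`, which parametrizes the
polynomials whose coefficients are Frobenius conjugates of one element. For the cyclotomic coset of
`a`, the exponents are `e j = a * q ^ j % (q ^ t - 1)`. -/
noncomputable def frobeniusSum (s : Finset ℕ) (e : ℕ → ℕ) : A →ₗ[B] A[X] :=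
  ∑ j ∈ s, (monomial (e j)).restrictScalars B ∘ₗ (FiniteField.frobeniusAlgHom B A ^ j).toLinearMap

theorem frobeniusSum_apply (s : Finset ℕ) (e : ℕ → ℕ) (c : A) :
    frobeniusSum B A s e c = ∑ j ∈ s, C (c ^ Fintype.card B ^ j) * X ^ e j := by
  simp [frobeniusSum, AlgHom.coe_pow, FiniteField.coe_frobeniusAlgHom, pow_iterate,
    C_mul_X_pow_eq_monomial, -map_pow]

theorem frobeniusSum_pow (s : Finset ℕ) (e : ℕ → ℕ) (ω : A) (ℓ : ℕ) :
    frobeniusSum B A s e (ω ^ ℓ) = ∑ j ∈ s, C (ω ^ (ℓ * Fintype.card B ^ j)) * X ^ e j := by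
  simp only [frobeniusSum_apply, pow_mul]

theorem stmt_7_general {ω : A} (hω : IsIntegral B ω) (s : Finset ℕ) (e : ℕ → ℕ)
    {c : A} (hc : c ∈ Algebra.adjoin B {ω}) :
    ∑ j ∈ s, C (c ^ Fintype.card B ^ j) * X ^ e j ∈
      span B ((fun ℓ : ℕ ↦ ∑ j ∈ s, C (ω ^ (ℓ * Fintype.card B ^ j)) * X ^ e j) ''
        Set.Iio (minpoly B ω).natDegree) := by
  classical
  have hc_span : c ∈ span B ((ω ^ ·) '' Set.Iio (minpoly B ω).natDegree) := by
    rwa [← Subalgebra.mem_toSubmodule,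
      ← span_range_natDegree_eq_adjoin (minpoly.monic hω) (minpoly.aeval B ω),
      Finset.coe_image, Finset.coe_range] at hc
  have h_image := mem_map_of_mem (f := frobeniusSum B A s e) hc_span
  simpa only [← frobeniusSum_apply, ← frobeniusSum_pow, map_span, Set.image_image] using h_image

end FrobeniusSum

theorem stmt_7 (q t : ℕ) (hq : ∃ p m : ℕ, p.Prime ∧ 0 < m ∧ q = p ^ m) (ht : 1 ≤ t)
    (B F : Type) [Field B] [Fintype B] [Field F] [Fintype F] [Algebra B F]
    (hB : Fintype.card B = q) (hrank : Module.finrank B F = t)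
    (hF : Fintype.card F = q ^ t)
    (ω : F) (hω : ∀ x : F, x ≠ 0 → ∃ j : ℕ, x = ω ^ j)
    (a s : ℕ) (ha : a ≤ q ^ t - 2) (hs : (cycCoset q t a).ncard = s) :
    ∀ c : F,
      (∑ j ∈ Finset.range s,
          Polynomial.C (c ^ q ^ j) * Polynomial.X ^ (a * q ^ j % (q ^ t - 1))) ∈
        Submodule.span B
          {p : Polynomial F | ∃ ℓ : ℕ, ℓ ≤ t - 1 ∧ p = Tpoly F q t ω a s ℓ} := by
  subst hB
  intro c
  have hspan := stmt_7_general (IsIntegral.of_finite B ω) (Finset.range s)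
    (fun j ↦ a * Fintype.card B ^ j % (Fintype.card B ^ t - 1))
    (mem_adjoin_singleton_of_forall_ne_zero_eq_pow hω c)
  refine Submodule.span_mono ?_ hspan
  rintro _ ⟨ℓ, hℓ, rfl⟩
  have hℓt : ℓ < t := hrank ▸ hℓ.trans_le (minpoly.natDegree_le ω)
  exact ⟨ℓ, Nat.le_sub_one_of_lt hℓt, rfl⟩
end

section
/- Fix k with 2 ≤ k ≤ q^t. The set F_k = {f ∈ F[X] : deg f ≤ q^t−k, the coefficients of X^0 and X^1 in f are 0, and f(α) ∈ B for all α ∈ F} is a B-submodule of F[X], and its dimension over B equals Σ_{C ∈ Ξ_k^*} |C|. -/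
/-- `Ξ_k^*`: the collection of cyclotomic cosets modulo `q^t - 1` all of whose
elements lie in `{2, 3, …, q^t - k}`. -/
def XiStar (q t k : ℕ) : Set (Set ℕ) :=
  {C : Set ℕ | (∃ i : ℕ, i ≤ q ^ t - 2 ∧ C = cycCoset q t i) ∧ C ⊆ Set.Icc 2 (q ^ t - k)}

/-!
Write `n = q ^ t - 1` and let `f = ∑ i < n, c i * X ^ i`. Since `α ^ (q ^ t) = α` on `F`, the
function `f ^ q` is given by `∑ i < n, c i ^ q * X ^ (i * q % n)`, again of degree `< q ^ t`.
Comparing coefficients, `f` takes values in `B` if and only if `c (i * q % n) = c i ^ q` for all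
`i < n`. In particular the support of `c` is then a union of cyclotomic cosets, and `c` is a
Galois-equivariant function on it, where the Frobenius acts on exponents as multiplication by `q`.
By the normal basis theorem, `F` is coinduced from `B` along `1 → Gal(F/B)`, so the equivariant
functions `S → F` are in bijection with arbitrary functions `S → B`, and their dimension is the
number of exponents in `S`.
-/

open Polynomial Module Function

section CyclotomicCosets

variable {q t : ℕ} {i m : ℕ} {T : Set ℕ}

/-- Multiplication by `q` on the residues modulo `q ^ t - 1`; on residues `i < q ^ t - 1` its orbits
are the cyclotomic cosets. -/
def cycShift (q t i : ℕ) : ℕ := i * q % (q ^ t - 1)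

theorem cycShift_lt (hi : i < q ^ t - 1) : cycShift q t i < q ^ t - 1 :=
  Nat.mod_lt _ (by omega)

theorem cycShift_iterate (hi : i < q ^ t - 1) (j : ℕ) :
    (cycShift q t)^[j] i = i * q ^ j % (q ^ t - 1) := by
  induction j with
  | zero => simp [Nat.mod_eq_of_lt hi]
  | succ j ih => rw [iterate_succ_apply', ih, cycShift, Nat.mod_mul_mod, mul_assoc, pow_succ]

theorem isPeriodicPt_cycShift (hi : i < q ^ t - 1) : IsPeriodicPt (cycShift q t) t i := by
  have hqt : q ^ t ≡ 1 [MOD q ^ t - 1] := (Nat.modEq_iff_dvd' (by omega)).2 dvd_rfl |>.symm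
  have hiq : i * q ^ t ≡ i [MOD q ^ t - 1] := by simpa using hqt.mul_left i
  exact (cycShift_iterate hi t).trans (Nat.mod_eq_of_modEq hiq hi)

theorem cycShift_injOn : Set.InjOn (cycShift q t) (Set.Iio (q ^ t - 1)) := by
  intro i hi m hm h
  have ht : 0 < t := Nat.pos_of_ne_zero (by rintro rfl; simp at hi)
  exact (isPeriodicPt_cycShift hi).eq_of_apply_eq_same (isPeriodicPt_cycShift hm) ht h

theorem cycShift_bijOn_of_mapsTo {S : Set ℕ} (hS : S ⊆ Set.Iio (q ^ t - 1))
    (hmaps : Set.MapsTo (cycShift q t) S S) : Set.BijOn (cycShift q t) S S :=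
  (((Set.finite_Iio _).subset hS).injOn_iff_bijOn_of_mapsTo hmaps).1 (cycShift_injOn.mono hS)

theorem cycShift_bijOn : Set.BijOn (cycShift q t) (Set.Iio (q ^ t - 1)) (Set.Iio (q ^ t - 1)) :=
  cycShift_bijOn_of_mapsTo subset_rfl fun _ ↦ cycShift_lt

theorem mem_cycCoset_iff (hi : i < q ^ t - 1) :
    m ∈ cycCoset q t i ↔ ∃ j, (cycShift q t)^[j] i = m := by
  simp only [cycCoset, Set.mem_ofPred_eq, cycShift_iterate hi, eq_comm]

theorem lt_of_mem_cycCoset (hi : i < q ^ t - 1) (hm : m ∈ cycCoset q t i) : m < q ^ t - 1 := by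
  obtain ⟨j, rfl⟩ := hm
  exact Nat.mod_lt _ (by omega)

theorem self_mem_cycCoset (hi : i < q ^ t - 1) : i ∈ cycCoset q t i :=
  (mem_cycCoset_iff hi).2 ⟨0, rfl⟩

theorem cycCoset_subset_of_mem (hi : i < q ^ t - 1) (hm : m ∈ cycCoset q t i) :
    cycCoset q t m ⊆ cycCoset q t i := by
  intro l hl
  obtain ⟨a, rfl⟩ := (mem_cycCoset_iff (lt_of_mem_cycCoset hi hm)).1 hl
  obtain ⟨b, rfl⟩ := (mem_cycCoset_iff hi).1 hm
  exact (mem_cycCoset_iff hi).2 ⟨a + b, iterate_add_apply _ a b i⟩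

theorem mem_cycCoset_symm (hi : i < q ^ t - 1) (hm : m ∈ cycCoset q t i) :
    i ∈ cycCoset q t m := by
  have ht : 0 < t := Nat.pos_of_ne_zero (by rintro rfl; simp at hi)
  obtain ⟨j, hj⟩ := (mem_cycCoset_iff hi).1 hm
  refine (mem_cycCoset_iff (lt_of_mem_cycCoset hi hm)).2 ⟨t * j - j, ?_⟩
  rw [← hj, ← iterate_add_apply, Nat.sub_add_cancel (Nat.le_mul_of_pos_left j ht)]
  exact (isPeriodicPt_cycShift hi).mul_const j

theorem cycCoset_eq_of_mem (hi : i < q ^ t - 1) (hm : m ∈ cycCoset q t i) :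
    cycCoset q t m = cycCoset q t i :=
  (cycCoset_subset_of_mem hi hm).antisymm
    (cycCoset_subset_of_mem (lt_of_mem_cycCoset hi hm) (mem_cycCoset_symm hi hm))

/-- The union of the cyclotomic cosets modulo `q ^ t - 1` contained in `T`, that is, the largest set
of exponents inside `T` stable under `cycShift`. -/
def cosetCore (q t : ℕ) (T : Set ℕ) : Set ℕ := {i | i < q ^ t - 1 ∧ cycCoset q t i ⊆ T}

theorem cosetCore_subset : cosetCore q t T ⊆ T :=
  fun _ hi ↦ hi.2 (self_mem_cycCoset hi.1)

theorem cosetCore_subset_Iio : cosetCore q t T ⊆ Set.Iio (q ^ t - 1) :=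
  fun _ hi ↦ hi.1

theorem mapsTo_cycShift_cosetCore :
    Set.MapsTo (cycShift q t) (cosetCore q t T) (cosetCore q t T) := fun _ hi ↦
  ⟨cycShift_lt hi.1, (cycCoset_subset_of_mem hi.1 ((mem_cycCoset_iff hi.1).2 ⟨1, rfl⟩)).trans hi.2⟩

theorem sUnion_XiStar (hqt : 2 ≤ q ^ t) (k : ℕ) :
    ⋃₀ XiStar q t k = cosetCore q t (Set.Icc 2 (q ^ t - k)) := by
  ext m
  constructor
  · rintro ⟨_, ⟨⟨i, hi, rfl⟩, hC⟩, hm⟩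
    have hi' : i < q ^ t - 1 := by omega
    exact ⟨lt_of_mem_cycCoset hi' hm, (cycCoset_subset_of_mem hi' hm).trans hC⟩
  · rintro ⟨hm, hC⟩
    exact ⟨_, ⟨⟨m, by omega, rfl⟩, hC⟩, self_mem_cycCoset hm⟩

theorem pairwiseDisjoint_XiStar (hqt : 2 ≤ q ^ t) (k : ℕ) :
    (XiStar q t k).PairwiseDisjoint id := by
  rintro _ ⟨⟨i, hi, rfl⟩, -⟩ _ ⟨⟨l, hl, rfl⟩, -⟩ hne
  refine Set.disjoint_left.2 fun m hmi hml ↦ hne ?_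
  exact (cycCoset_eq_of_mem (by omega) hmi).symm.trans (cycCoset_eq_of_mem (by omega) hml)

theorem finsum_ncard_XiStar (hqt : 2 ≤ q ^ t) (k : ℕ) :
    ∑ᶠ C ∈ XiStar q t k, C.ncard = (cosetCore q t (Set.Icc 2 (q ^ t - k))).ncard := by
  have hfin : (XiStar q t k).Finite :=
    (Set.finite_Icc 2 (q ^ t - k)).finite_subsets.subset fun _ hC ↦ hC.2
  rw [← sUnion_XiStar hqt, Set.sUnion_eq_biUnion, hfin.ncard_biUnion
    (fun _ hC ↦ (Set.finite_Icc _ _).subset hC.2) (pairwiseDisjoint_XiStar hqt k)]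

end CyclotomicCosets

section EquivariantFunctions

variable {k K S : Type*} [Field k] [Field K] [Algebra k K]

/-- The `k`-space of functions `c : S → K` that are equivariant for the action `ρ` of the Galois
group on `S` and its natural action on `K`. -/
def equivariantFunctions (ρ : Gal(K/k) →* Equiv.Perm S) : Submodule k (S → K) where
  carrier := {c | ∀ g s, c (ρ g s) = g (c s)}
  add_mem' hc hd g s := by simp [hc g s, hd g s]
  zero_mem' := by simp
  smul_mem' a c hc g s := by simp [hc g s]

theorem mem_equivariantFunctions_iff_of_generator [FiniteDimensional k K]
    {ρ : Gal(K/k) →* Equiv.Perm S} {φ : Gal(K/k)} (hφ : ∀ g, g ∈ Subgroup.zpowers φ) {c : S → K} :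
    c ∈ equivariantFunctions ρ ↔ ∀ s, c (ρ φ s) = φ (c s) := by
  refine ⟨fun hc ↦ hc φ, fun hc g ↦ ?_⟩
  obtain ⟨j, rfl⟩ := mem_powers_iff_mem_zpowers.2 (hφ g)
  induction j with
  | zero => simp
  | succ j ih =>
    intro s
    beta_reduce at ih ⊢
    rw [pow_succ', map_mul, Equiv.Perm.mul_apply, hc, AlgEquiv.mul_apply, ih]

variable [FiniteDimensional k K] [IsGalois k K]

theorem galois_apply_normalBasis (g h : Gal(K/k)) :
    g (IsGalois.normalBasis k K h) = IsGalois.normalBasis k K (g * h) := by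
  rw [IsGalois.normalBasis_apply h, IsGalois.normalBasis_apply (g * h), AlgEquiv.mul_apply]

theorem normalBasis_coord_one_galois_inv (g : Gal(K/k)) (x : K) :
    (IsGalois.normalBasis k K).coord 1 (g⁻¹ x) = (IsGalois.normalBasis k K).coord g x := by
  classical
  suffices (IsGalois.normalBasis k K).coord 1 ∘ₗ g⁻¹.toLinearMap =
      (IsGalois.normalBasis k K).coord g from LinearMap.congr_fun this x
  refine (IsGalois.normalBasis k K).ext fun h ↦ ?_
  rw [LinearMap.comp_apply, AlgEquiv.toLinearMap_apply, galois_apply_normalBasis,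
    Basis.coord_apply, Basis.coord_apply, Basis.repr_self_apply, Basis.repr_self_apply]
  simp only [inv_mul_eq_one, eq_comm]

theorem sum_smul_normalBasis_mem_equivariantFunctions (ρ : Gal(K/k) →* Equiv.Perm S) (d : S → k) :
    (fun s ↦ ∑ g, d (ρ g⁻¹ s) • IsGalois.normalBasis k K g) ∈ equivariantFunctions ρ := by
  intro h s
  simp only [map_sum, map_smul, galois_apply_normalBasis]
  refine (Fintype.sum_equiv (Equiv.mulLeft h) _ _ fun g ↦ ?_).symm
  simp [← Equiv.Perm.mul_apply, ← map_mul]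

/-- Since `K` is coinduced from `k`, an equivariant function is determined by its coordinate at the
generator of the normal basis, which can be prescribed arbitrarily. -/
noncomputable def equivariantFunctionsEquiv (ρ : Gal(K/k) →* Equiv.Perm S) :
    equivariantFunctions ρ ≃ₗ[k] (S → k) where
  toFun c s := (IsGalois.normalBasis k K).coord 1 (c.1 s)
  map_add' c d := by ext; simp
  map_smul' a c := by ext; simp
  invFun d := ⟨_, sum_smul_normalBasis_mem_equivariantFunctions ρ d⟩
  left_inv c := by
    ext s
    simp only [c.2 _ s, normalBasis_coord_one_galois_inv]
    exact (IsGalois.normalBasis k K).sum_repr (c.1 s)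
  right_inv d := by
    classical
    ext s
    simp [Finsupp.single_apply, -map_inv]

theorem finrank_equivariantFunctions [Finite S] (ρ : Gal(K/k) →* Equiv.Perm S) :
    finrank k (equivariantFunctions ρ) = Nat.card S := by
  have := Fintype.ofFinite S
  rw [(equivariantFunctionsEquiv ρ).finrank_eq, finrank_fintype_fun_eq_card,
    Nat.card_eq_fintype_card]

end EquivariantFunctions

section FiniteFields

variable {q t : ℕ} {F : Type*} [Field F]

theorem pow_cycShift [Finite F] (hF : Nat.card F = q ^ t) (α : F) {i : ℕ} (hi : i < q ^ t - 1) :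
    α ^ cycShift q t i = α ^ (i * q) := by
  have := Fintype.ofFinite F
  by_cases hα : α = 0
  · have hiff : cycShift q t i = 0 ↔ i * q = 0 := by
      refine ⟨fun h ↦ ?_, fun h ↦ by simp [cycShift, h]⟩
      have h0 : cycShift q t 0 = 0 := by simp [cycShift]
      rw [cycShift_injOn hi (show (0 : ℕ) < q ^ t - 1 by omega) (h.trans h0.symm), zero_mul]
    simp only [hα, zero_pow_eq, hiff]
  · have hone : α ^ (q ^ t - 1) = 1 := by
      rw [← hF, Nat.card_eq_fintype_card, FiniteField.pow_card_sub_one_eq_one α hα]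
    exact (pow_eq_pow_mod _ hone).symm

/-- Over a field with `q ^ t` elements containing one with `q` elements, the reduction of `f ^ q`
modulo `X ^ (q ^ t) - X`, for `f` of degree less than `q ^ t - 1`. -/
noncomputable def frobeniusTwist (q t : ℕ) (f : F[X]) : F[X] :=
  ∑ i ∈ Finset.range (q ^ t - 1), monomial (cycShift q t i) (f.coeff i ^ q)

theorem coeff_frobeniusTwist_cycShift (f : F[X]) {i : ℕ} (hi : i < q ^ t - 1) :
    (frobeniusTwist q t f).coeff (cycShift q t i) = f.coeff i ^ q := by
  rw [frobeniusTwist, finsetSum_coeff, Finset.sum_eq_single_of_mem i (Finset.mem_range.2 hi),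
    coeff_monomial_same]
  intro j hj hne
  exact coeff_monomial_of_ne _ fun h ↦ hne (cycShift_injOn (Finset.mem_range.1 hj) hi h.symm)

theorem degree_frobeniusTwist_lt (f : F[X]) :
    (frobeniusTwist q t f).degree < (q ^ t - 1 : ℕ) := by
  refine (degree_sum_le _ _).trans_lt ((Finset.sup_lt_iff (WithBot.bot_lt_coe _)).2 fun i hi ↦ ?_)
  exact (degree_monomial_le _ _).trans_lt
    (WithBot.coe_lt_coe.2 (cycShift_lt (Finset.mem_range.1 hi)))

theorem frobeniusTwist_eq_self_iff {f : F[X]} (hf : f.degree < (q ^ t - 1 : ℕ)) :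
    frobeniusTwist q t f = f ↔ ∀ i < q ^ t - 1, f.coeff (cycShift q t i) = f.coeff i ^ q := by
  refine ⟨fun h i hi ↦ by rw [← coeff_frobeniusTwist_cycShift f hi, h], fun h ↦ ?_⟩
  ext m
  rcases lt_or_ge m (q ^ t - 1) with hm | hm
  · obtain ⟨i, hi, rfl⟩ := cycShift_bijOn.surjOn hm
    rw [coeff_frobeniusTwist_cycShift f hi, h i hi]
  · rw [(degree_lt_iff_coeff_zero _ _).1 (degree_frobeniusTwist_lt f) m hm,
      (degree_lt_iff_coeff_zero _ _).1 hf m hm]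

variable {B : Type*} [Field B] [Fintype B] [Algebra B F] [Finite F]

theorem mem_zpowers_frobenius (g : Gal(F/B)) :
    g ∈ Subgroup.zpowers (FiniteField.frobeniusAlgEquivOfAlgebraic B F) := by
  obtain ⟨j, rfl⟩ := (FiniteField.bijective_frobeniusAlgEquivOfAlgebraic_pow B F).2 g
  exact Subgroup.npow_mem_zpowers _ _

theorem mem_range_algebraMap_iff_pow_card_eq (x : F) :
    x ∈ Set.range (algebraMap B F) ↔ x ^ Fintype.card B = x := by
  rw [IsGalois.mem_range_algebraMap_iff_fixed]
  refine ⟨fun h ↦ h (FiniteField.frobeniusAlgEquivOfAlgebraic B F), fun h g ↦ ?_⟩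
  exact Subgroup.zpowers_le (H := MulAction.stabilizer Gal(F/B) x).2 h (mem_zpowers_frobenius g)

theorem eval_frobeniusTwist (hB : Fintype.card B = q) (hF : Nat.card F = q ^ t) {f : F[X]}
    (hf : f.degree < (q ^ t - 1 : ℕ)) (α : F) :
    (frobeniusTwist q t f).eval α = f.eval α ^ q := by
  have hfrob (x : F) : x ^ q = FiniteField.frobeniusAlgHom B F x := by
    rw [FiniteField.coe_frobeniusAlgHom, hB]
  have hsum : f.eval α = ∑ i ∈ Finset.range (q ^ t - 1), f.coeff i * α ^ i := by
    rw [eval_eq_sum, ← sum_fin _ (by simp) hf,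
      Fin.sum_univ_eq_sum_range (fun i ↦ f.coeff i * α ^ i)]
  rw [frobeniusTwist, eval_finsetSum, hsum, hfrob, map_sum]
  refine Finset.sum_congr rfl fun i hi ↦ ?_
  rw [eval_monomial, pow_cycShift hF α (Finset.mem_range.1 hi), ← hfrob, mul_pow, pow_mul]

theorem forall_eval_mem_range_iff_coeff (hB : Fintype.card B = q) (hF : Nat.card F = q ^ t)
    {f : F[X]} (hf : f.degree < (q ^ t - 1 : ℕ)) :
    (∀ α, f.eval α ∈ Set.range (algebraMap B F)) ↔
      ∀ i < q ^ t - 1, f.coeff (cycShift q t i) = f.coeff i ^ q := by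
  have := Fintype.ofFinite F
  have hcard : ((q ^ t - 1 : ℕ) : WithBot ℕ) ≤ (Finset.univ : Finset F).card := by
    rw [Finset.card_univ, ← Nat.card_eq_fintype_card, hF]
    exact WithBot.coe_le_coe.2 (Nat.sub_le _ _)
  simp only [← frobeniusTwist_eq_self_iff hf, mem_range_algebraMap_iff_pow_card_eq, hB,
    ← eval_frobeniusTwist hB hF hf]
  refine ⟨fun h ↦ ?_, fun h α ↦ by rw [h]⟩
  exact eq_of_degrees_lt_of_eval_finset_eq Finset.univ
    ((degree_frobeniusTwist_lt f).trans_le hcard) (hf.trans_le hcard) fun α _ ↦ h α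

end FiniteFields

section SubfieldValued

/-- The `B`-space of polynomials over `F` whose exponents lie in `T` and whose values on `F` lie in
the subfield `B`. -/
def subfieldValued (B F : Type*) [Field B] [Field F] [Algebra B F] (T : Set ℕ) :
    Submodule B F[X] where
  carrier := {f | (∀ i ∉ T, f.coeff i = 0) ∧ ∀ α, f.eval α ∈ Set.range (algebraMap B F)}
  add_mem' := by
    rintro f g ⟨hf, hfB⟩ ⟨hg, hgB⟩
    refine ⟨fun i hi ↦ by simp [hf i hi, hg i hi], fun α ↦ ?_⟩
    rw [eval_add]
    exact (algebraMap B F).range.add_mem (hfB α) (hgB α)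
  zero_mem' := ⟨by simp, fun α ↦ ⟨0, by simp⟩⟩
  smul_mem' := by
    rintro b f ⟨hf, hfB⟩
    refine ⟨fun i hi ↦ by simp [hf i hi], fun α ↦ ?_⟩
    rw [eval_smul, Algebra.smul_def]
    exact (algebraMap B F).range.mul_mem ⟨b, rfl⟩ (hfB α)

variable {q t : ℕ} {B F : Type*} [Field B] [Field F] [Algebra B F] {S T : Set ℕ} {f : F[X]}

theorem degree_lt_of_forall_notMem_coeff_eq_zero (hT : T ⊆ Set.Iio (q ^ t - 1))
    (hf : ∀ i ∉ T, f.coeff i = 0) : f.degree < (q ^ t - 1 : ℕ) :=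
  (degree_lt_iff_coeff_zero _ _).2 fun _ hm ↦ hf _ fun hmT ↦ (hT hmT).not_ge hm

theorem subfieldValued_mono (hST : S ⊆ T) : subfieldValued B F S ≤ subfieldValued B F T :=
  fun _ hf ↦ ⟨fun i hi ↦ hf.1 i fun hiS ↦ hi (hST hiS), hf.2⟩

/-- The map sending a polynomial to its coefficients at the exponents in `S`. -/
noncomputable def coeffRestrict (B F : Type*) [Field B] [Field F] [Algebra B F] (S : Set ℕ) :
    F[X] →ₗ[B] (S → F) :=
  LinearMap.pi fun s ↦ (lcoeff F s).restrictScalars B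

theorem exists_coeffRestrict_eq (hS : S.Finite) (c : S → F) :
    ∃ f : F[X], coeffRestrict B F S f = c ∧ ∀ i ∉ S, f.coeff i = 0 := by
  classical
  have := hS.fintype
  refine ⟨∑ s : S, monomial s (c s), ?_, fun i hi ↦ ?_⟩
  · ext s
    simp [coeffRestrict, coeff_monomial, Subtype.coe_inj]
  · rw [finsetSum_coeff]
    exact Finset.sum_eq_zero fun s _ ↦ coeff_monomial_of_ne _ fun h ↦ hi (h ▸ s.2)

variable [Fintype B] [Finite F]

theorem natCard_eq_pow_of_finrank_eq (hB : Fintype.card B = q) (hrank : finrank B F = t) :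
    Nat.card F = q ^ t := by
  rw [natCard_eq_pow_finrank (K := B), Nat.card_eq_fintype_card, hB, hrank]

theorem coeff_cycShift_iterate (hB : Fintype.card B = q) (hF : Nat.card F = q ^ t)
    (hf : f.degree < (q ^ t - 1 : ℕ)) (hfB : ∀ α, f.eval α ∈ Set.range (algebraMap B F))
    {i : ℕ} (hi : i < q ^ t - 1) (j : ℕ) :
    f.coeff ((cycShift q t)^[j] i) = f.coeff i ^ q ^ j := by
  induction j with
  | zero => simp
  | succ j ih =>
    have hlt : (cycShift q t)^[j] i < q ^ t - 1 := cycShift_bijOn.mapsTo.iterate j hi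
    rw [iterate_succ_apply', (forall_eval_mem_range_iff_coeff hB hF hf).1 hfB _ hlt, ih, ← pow_mul,
      pow_succ]

theorem subfieldValued_cosetCore (hB : Fintype.card B = q) (hF : Nat.card F = q ^ t)
    (hT : T ⊆ Set.Iio (q ^ t - 1)) :
    subfieldValued B F (cosetCore q t T) = subfieldValued B F T := by
  refine (subfieldValued_mono cosetCore_subset).antisymm fun f hf ↦ ⟨fun i hi ↦ ?_, hf.2⟩
  by_contra hne
  have hin : i < q ^ t - 1 := hT (by_contra fun hiT ↦ hne (hf.1 i hiT))
  refine hi ⟨hin, fun m hm ↦ by_contra fun hmT ↦ ?_⟩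
  obtain ⟨j, rfl⟩ := (mem_cycCoset_iff hin).1 hm
  have hdeg := degree_lt_of_forall_notMem_coeff_eq_zero hT hf.1
  have hcoeff := coeff_cycShift_iterate hB hF hdeg hf.2 hin j
  exact pow_ne_zero _ hne (hcoeff.symm.trans (hf.1 _ hmT))

theorem exists_galois_action_cycShift (hrank : finrank B F = t) (hS : S ⊆ Set.Iio (q ^ t - 1))
    (hmaps : Set.MapsTo (cycShift q t) S S) :
    ∃ ρ : Gal(F/B) →* Equiv.Perm S,
      ∀ s, (ρ (FiniteField.frobeniusAlgEquivOfAlgebraic B F) s : ℕ) = cycShift q t s := by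
  let σ : Equiv.Perm S := (cycShift_bijOn_of_mapsTo hS hmaps).equiv
  have hσ (j : ℕ) (s : S) : ((σ ^ j) s : ℕ) = (cycShift q t)^[j] s := by
    induction j with
    | zero => rfl
    | succ j ih => rw [pow_succ', iterate_succ_apply', ← ih]; rfl
  have hord : orderOf σ ∣ orderOf (FiniteField.frobeniusAlgEquivOfAlgebraic B F) := by
    rw [FiniteField.orderOf_frobeniusAlgEquivOfAlgebraic, hrank]
    refine orderOf_dvd_of_pow_eq_one (Equiv.ext fun s ↦ Subtype.ext ?_)
    exact (hσ t s).trans (isPeriodicPt_cycShift (hS s.2))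
  refine ⟨monoidHomOfForallMemZpowers mem_zpowers_frobenius hord, fun s ↦ ?_⟩
  rw [monoidHomOfForallMemZpowers_apply_gen]
  rfl

theorem mem_subfieldValued_iff_of_mapsTo (hB : Fintype.card B = q) (hF : Nat.card F = q ^ t)
    (hS : S ⊆ Set.Iio (q ^ t - 1)) (hmaps : Set.MapsTo (cycShift q t) S S) :
    f ∈ subfieldValued B F S ↔
      (∀ i ∉ S, f.coeff i = 0) ∧ ∀ i ∈ S, f.coeff (cycShift q t i) = f.coeff i ^ q := by
  refine and_congr_right fun hsupp ↦ ?_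
  rw [forall_eval_mem_range_iff_coeff hB hF (degree_lt_of_forall_notMem_coeff_eq_zero hS hsupp)]
  refine ⟨fun h i hi ↦ h i (hS hi), fun h i hi ↦ ?_⟩
  by_cases hiS : i ∈ S
  · exact h i hiS
  have hshift : cycShift q t i ∉ S := by
    intro hmem
    obtain ⟨j, hj, hji⟩ := (cycShift_bijOn_of_mapsTo hS hmaps).surjOn hmem
    exact hiS (cycShift_injOn (hS hj) hi hji ▸ hj)
  rw [hsupp i hiS, hsupp _ hshift, zero_pow (hB ▸ Fintype.card_ne_zero)]

theorem map_coeffRestrict_subfieldValued (hB : Fintype.card B = q) (hF : Nat.card F = q ^ t)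
    (hS : S ⊆ Set.Iio (q ^ t - 1)) (hmaps : Set.MapsTo (cycShift q t) S S)
    {ρ : Gal(F/B) →* Equiv.Perm S}
    (hρ : ∀ s, (ρ (FiniteField.frobeniusAlgEquivOfAlgebraic B F) s : ℕ) = cycShift q t s) :
    (subfieldValued B F S).map (coeffRestrict B F S) = equivariantFunctions ρ := by
  have hiff {f : F[X]} (hsupp : ∀ i ∉ S, f.coeff i = 0) :
      f ∈ subfieldValued B F S ↔ coeffRestrict B F S f ∈ equivariantFunctions ρ := by
    rw [mem_subfieldValued_iff_of_mapsTo hB hF hS hmaps, and_iff_right hsupp,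
      mem_equivariantFunctions_iff_of_generator mem_zpowers_frobenius]
    simp [coeffRestrict, hρ, hB]
  ext c
  constructor
  · rintro ⟨f, hf, rfl⟩
    exact (hiff hf.1).1 hf
  · intro hc
    obtain ⟨f, rfl, hsupp⟩ := exists_coeffRestrict_eq (B := B) ((Set.finite_Iio _).subset hS) c
    exact ⟨f, (hiff hsupp).2 hc, rfl⟩

theorem finrank_subfieldValued_of_mapsTo (hB : Fintype.card B = q) (hrank : finrank B F = t)
    (hS : S ⊆ Set.Iio (q ^ t - 1)) (hmaps : Set.MapsTo (cycShift q t) S S) :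
    finrank B (subfieldValued B F S) = S.ncard := by
  have hF := natCard_eq_pow_of_finrank_eq hB hrank
  have : Finite S := (Set.finite_Iio _).subset hS
  obtain ⟨ρ, hρ⟩ := exists_galois_action_cycShift hrank hS hmaps
  have hinj : Injective ((coeffRestrict B F S).domRestrict (subfieldValued B F S)) := by
    refine (injective_iff_map_eq_zero _).2 fun f hf ↦ Subtype.ext (Polynomial.ext fun i ↦ ?_)
    by_cases hi : i ∈ S
    · exact congrFun hf ⟨i, hi⟩
    · exact f.2.1 i hi
  rw [← LinearMap.finrank_range_of_inj hinj, LinearMap.range_domRestrict,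
    map_coeffRestrict_subfieldValued hB hF hS hmaps hρ, finrank_equivariantFunctions]
  rfl

theorem finrank_subfieldValued (hB : Fintype.card B = q) (hrank : finrank B F = t)
    (hT : T ⊆ Set.Iio (q ^ t - 1)) :
    finrank B (subfieldValued B F T) = (cosetCore q t T).ncard := by
  rw [← subfieldValued_cosetCore hB (natCard_eq_pow_of_finrank_eq hB hrank) hT,
    finrank_subfieldValued_of_mapsTo hB hrank cosetCore_subset_Iio mapsTo_cycShift_cosetCore]

end SubfieldValued

theorem forall_notMem_Icc_two_coeff_eq_zero_iff {R : Type*} [Semiring R] {f : R[X]} {N : ℕ} :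
    (∀ i ∉ Set.Icc 2 N, f.coeff i = 0) ↔ f.natDegree ≤ N ∧ f.coeff 0 = 0 ∧ f.coeff 1 = 0 := by
  rw [natDegree_le_iff_coeff_eq_zero]
  refine ⟨fun h ↦ ⟨fun i hi ↦ h i ?_, h 0 (by simp), h 1 (by simp)⟩, ?_⟩
  · exact fun hmem ↦ hi.not_ge hmem.2
  · rintro ⟨hN, h0, h1⟩ i hi
    rcases lt_or_ge N i with hlt | hle
    · exact hN i hlt
    · have : i < 2 := not_le.1 fun h2 ↦ hi ⟨h2, hle⟩
      interval_cases i <;> assumption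

theorem stmt_9 (q t k : ℕ) (hq : ∃ p m : ℕ, p.Prime ∧ 0 < m ∧ q = p ^ m) (ht : 1 ≤ t)
    (hk2 : 2 ≤ k) (hk : k ≤ q ^ t)
    (B F : Type) [Field B] [Fintype B] [Field F] [Fintype F] [Algebra B F]
    (hB : Fintype.card B = q) (hrank : Module.finrank B F = t)
    (hF : Fintype.card F = q ^ t) :
    ∃ Fk : Submodule B (Polynomial F),
      (Fk : Set (Polynomial F)) =
        {f : Polynomial F | f.natDegree ≤ q ^ t - k ∧ f.coeff 0 = 0 ∧ f.coeff 1 = 0 ∧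
          ∀ α : F, f.eval α ∈ Set.range (algebraMap B F)} ∧
      Module.finrank B Fk = ∑ᶠ C ∈ XiStar q t k, C.ncard := by
  have hT : Set.Icc 2 (q ^ t - k) ⊆ Set.Iio (q ^ t - 1) := fun i hi ↦ by
    simp only [Set.mem_Icc, Set.mem_Iio] at hi ⊢
    omega
  refine ⟨subfieldValued B F (Set.Icc 2 (q ^ t - k)), ?_, ?_⟩
  · ext f
    simpa only [and_assoc] using! and_congr_left' forall_notMem_Icc_two_coeff_eq_zero_iff
  · rw [finrank_subfieldValued hB hrank hT, finsum_ncard_XiStar (hk2.trans hk)]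
end

section
/- For k = 1 and q^t ≥ 3, the dimension of W_1 as a vector space over B equals q^t − 1 − t. -/
/-- The set `W_k` of vectors `c = (c_α)_{α ∈ F}` lying in the dual of `RS(F, k)`,
with `c_0 = 0` and `α · c_α ∈ B` for every `α ≠ 0`. -/
def WkSet (B F : Type) [Field B] [Field F] [Fintype F] [Algebra B F] (k : ℕ) :
    Set (F → F) :=
  {c : F → F |
    (∀ f : Polynomial F, f.degree < (k : WithBot ℕ) → ∑ α : F, c α * f.eval α = 0) ∧
    c 0 = 0 ∧
    ∀ α : F, α ≠ 0 → ∃ b : B, α * c α = algebraMap B F b}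

/-!
The conditions `c_0 = 0` and `α c_α ∈ B` say exactly that `c_α = b_α α⁻¹` for `α ≠ 0` with
arbitrary `b_α ∈ B`, which gives a space of dimension `|F| - 1` over `B`. For `k = 1` duality to
the Reed–Solomon code is the single equation `∑ b_α α⁻¹ = 0` in `F`. The inverses run through all
nonzero elements of `F`, hence span `F` over `B`, so this equation cuts the dimension by exactly
`[F : B]`.
-/

section LinearAlgebra

theorem finrank_add_finrank_ker_linearCombination {K V ι : Type*} [DivisionRing K]
    [AddCommGroup V] [Module K V] [Fintype ι] {v : ι → V}
    (hv : Submodule.span K (Set.range v) = ⊤) :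
    Module.finrank K V + Module.finrank K (LinearMap.ker (Fintype.linearCombination K v)) =
      Fintype.card ι := by
  rw [← finrank_top K V, ← hv, ← Fintype.range_linearCombination,
    LinearMap.finrank_range_add_finrank_ker, Module.finrank_fintype_fun_eq_card]

theorem span_range_units_inv (R K : Type*) [Semiring R] [DivisionRing K] [Module R K] :
    Submodule.span R (Set.range fun u : Kˣ ↦ (u : K)⁻¹) = ⊤ := by
  refine eq_top_iff.2 fun x _ ↦ ?_
  rcases eq_or_ne x 0 with rfl | hx
  · exact zero_mem _
  · exact Submodule.subset_span ⟨(Units.mk0 x hx)⁻¹, by simp⟩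

end LinearAlgebra

theorem forall_degree_lt_sum_mul_eval_eq_zero_iff {R ι : Type*} [CommSemiring R] (s : Finset ι)
    (c x : ι → R) (k : ℕ) :
    (∀ f : Polynomial R, f.degree < k → ∑ i ∈ s, c i * f.eval (x i) = 0) ↔
      ∀ j < k, ∑ i ∈ s, c i * x i ^ j = 0 := by
  constructor
  · intro h j hj
    simpa only [Polynomial.eval_pow, Polynomial.eval_X] using
      h (Polynomial.X ^ j) ((Polynomial.degree_X_pow_le j).trans_lt (mod_cast hj))
  · intro h f hf
    rcases eq_or_ne f 0 with rfl | hf₀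
    · simp
    have hdeg : f.natDegree < k := (Polynomial.natDegree_lt_iff_degree_lt hf₀).2 hf
    calc ∑ i ∈ s, c i * f.eval (x i)
        = ∑ j ∈ Finset.range k, f.coeff j * ∑ i ∈ s, c i * x i ^ j := by
          simp only [Polynomial.eval_eq_sum_range' hdeg, Finset.mul_sum, mul_left_comm (c _)]
          exact Finset.sum_comm
      _ = 0 := Finset.sum_eq_zero fun j hj ↦ by rw [h j (Finset.mem_range.1 hj), mul_zero]

section UnitsInvSMul

variable (B F : Type*) [CommSemiring B] [DivisionRing F] [Algebra B F]

/-- The linear parametrisation `b ↦ (b_α α⁻¹)_α` of the vectors `c` with `c_0 = 0` and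
`α c_α ∈ B` for `α ≠ 0`; the coordinates `b_α` are indexed by the units of `F`, and the entry at
`0` is `0`. -/
noncomputable def unitsInvSMul : (Fˣ → B) →ₗ[B] (F → F) :=
  (Function.ExtendByZero.linearMap F Units.val).restrictScalars B ∘ₗ
    LinearMap.pi fun u : Fˣ ↦ LinearMap.toSpanSingleton B F (u : F)⁻¹ ∘ₗ LinearMap.proj u

variable {B F}

theorem unitsInvSMul_apply_zero (b : Fˣ → B) : unitsInvSMul B F b 0 = 0 := by
  have h₀ : ¬∃ u : Fˣ, (u : F) = 0 := fun ⟨u, hu⟩ ↦ u.ne_zero hu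
  exact Function.extend_apply' (f := Units.val) _ _ _ h₀

theorem unitsInvSMul_apply_unit (b : Fˣ → B) (u : Fˣ) :
    unitsInvSMul B F b u = b u • (u : F)⁻¹ :=
  Units.val_injective.extend_apply (fun v : Fˣ ↦ b v • (v : F)⁻¹) 0 u

theorem unit_mul_unitsInvSMul_apply (b : Fˣ → B) (u : Fˣ) :
    (u : F) * unitsInvSMul B F b u = algebraMap B F (b u) := by
  rw [unitsInvSMul_apply_unit, mul_smul_comm, mul_inv_cancel₀ u.ne_zero,
    Algebra.algebraMap_eq_smul_one]

theorem unitsInvSMul_injective [FaithfulSMul B F] : Function.Injective (unitsInvSMul B F) := by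
  intro b c hbc
  funext u
  apply FaithfulSMul.algebraMap_injective B F
  rw [← unit_mul_unitsInvSMul_apply, hbc, unit_mul_unitsInvSMul_apply]

theorem mem_range_unitsInvSMul {c : F → F} :
    c ∈ LinearMap.range (unitsInvSMul B F) ↔
      c 0 = 0 ∧ ∀ α : F, α ≠ 0 → ∃ b : B, α * c α = algebraMap B F b := by
  constructor
  · rintro ⟨b, rfl⟩
    exact ⟨unitsInvSMul_apply_zero b,
      fun α hα ↦ ⟨_, unit_mul_unitsInvSMul_apply b (Units.mk0 α hα)⟩⟩
  · rintro ⟨hc₀, hc⟩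
    choose b hb using fun u : Fˣ ↦ hc u u.ne_zero
    refine ⟨b, funext fun α ↦ ?_⟩
    rcases eq_or_ne α 0 with rfl | hα
    · rw [unitsInvSMul_apply_zero, hc₀]
    · apply mul_left_cancel₀ hα
      exact (unit_mul_unitsInvSMul_apply b (Units.mk0 α hα)).trans (hb (Units.mk0 α hα)).symm

theorem sum_unitsInvSMul_apply [Fintype F] [Fintype Fˣ] (b : Fˣ → B) :
    ∑ α, unitsInvSMul B F b α = Fintype.linearCombination B (fun u : Fˣ ↦ (u : F)⁻¹) b := by
  rw [Fintype.linearCombination_apply]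
  refine (Fintype.sum_of_injective Units.val Units.val_injective _ _ (fun α hα ↦ ?_)
    fun u ↦ (unitsInvSMul_apply_unit b u).symm).symm
  obtain rfl : α = 0 := by_contra fun h ↦ hα ⟨Units.mk0 α h, rfl⟩
  exact unitsInvSMul_apply_zero b

end UnitsInvSMul

section WkSet

variable {B F : Type} [Field B] [Field F] [Fintype F] [Algebra B F]

theorem mem_wkSet_iff {k : ℕ} {c : F → F} :
    c ∈ WkSet B F k ↔
      (∀ j < k, ∑ α, c α * α ^ j = 0) ∧ c ∈ LinearMap.range (unitsInvSMul B F) := by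
  rw [mem_range_unitsInvSMul,
    ← forall_degree_lt_sum_mul_eval_eq_zero_iff Finset.univ c (fun α ↦ α) k]
  rfl

theorem wkSet_one_eq_map_ker [Fintype Fˣ] :
    WkSet B F 1 = (LinearMap.ker (Fintype.linearCombination B fun u : Fˣ ↦ (u : F)⁻¹)).map
      (unitsInvSMul B F) := by
  ext c
  simp only [mem_wkSet_iff, Nat.lt_one_iff, forall_eq, pow_zero, mul_one, SetLike.mem_coe,
    Submodule.mem_map, LinearMap.mem_ker, LinearMap.mem_range, ← sum_unitsInvSMul_apply]
  constructor
  · rintro ⟨hsum, b, rfl⟩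
    exact ⟨b, hsum, rfl⟩
  · rintro ⟨b, hsum, rfl⟩
    exact ⟨hsum, b, rfl⟩

end WkSet

theorem stmt_11 (q t : ℕ) (hq : ∃ p m : ℕ, p.Prime ∧ 0 < m ∧ q = p ^ m) (ht : 1 ≤ t)
    (hqt : 3 ≤ q ^ t)
    (B F : Type) [Field B] [Fintype B] [Field F] [Fintype F] [Algebra B F]
    (hB : Fintype.card B = q) (hrank : Module.finrank B F = t)
    (hF : Fintype.card F = q ^ t) :
    ∀ W : Submodule B (F → F), (W : Set (F → F)) = WkSet B F 1 →
      Module.finrank B W = q ^ t - 1 - t := by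
  classical
  intro W hW
  have hWker : W = (LinearMap.ker (Fintype.linearCombination B fun u : Fˣ ↦ (u : F)⁻¹)).map
      (unitsInvSMul B F) :=
    SetLike.coe_injective (hW.trans wkSet_one_eq_map_ker)
  have hdim := finrank_add_finrank_ker_linearCombination (span_range_units_inv B F)
  rw [hrank, Fintype.card_units, hF] at hdim
  rw [hWker, ← (Submodule.equivMapOfInjective _ unitsInvSMul_injective _).finrank_eq]
  exact Nat.eq_sub_of_add_eq' hdim
end

section
/- Fix k with 1 ≤ k ≤ q^t. A vector c = (c_α)_{α∈F} belongs to W_k if and only if there exists a polynomial h ∈ F[X] with deg h < q^t − k such that h(0) = 0, α·h(α) ∈ B for every α ∈ F \ {0}, and c_α = h(α) for every α ∈ F. -/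
/-!
For `n` distinct nodes `v i`, let `u i` be the inverse of `∏ j ≠ i, (v i - v j)`. Comparing leading
coefficients in Lagrange interpolation shows that `∑ i, u i * p (v i)` is the coefficient of
`X ^ (n - 1)` in `p` whenever `deg p < n`. Hence a polynomial `h` with `deg h < n` satisfies
`∑ i, u i * h (v i) * f (v i) = 0` for all `f` with `deg f < k` if and only if `deg h < n - k`:
otherwise `f = X ^ (n - 1 - deg h)` extracts the leading coefficient of `h`. As every vector is of
the form `i ↦ u i * h (v i)`, this identifies the dual of a Reed–Solomon code. When the nodes are
all elements of a finite field `F`, the node polynomial is `X ^ |F| - X`, with derivative `-1`, so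
all `u i` equal `-1`.
-/

open Polynomial Lagrange

section Nodes

variable {F ι : Type*} [Field F] [DecidableEq ι] {s : Finset ι} {v : ι → F}

theorem sum_nodalWeight_mul_eval (hv : Set.InjOn v s) {p : F[X]} (hp : p.degree < s.card) :
    ∑ i ∈ s, nodalWeight s v i * p.eval (v i) = p.coeff (s.card - 1) := by
  simp only [coeff_eq_sum hv hp, nodalWeight, Finset.prod_inv_distrib, div_eq_inv_mul]

theorem sum_nodalWeight_mul_eval_mul_X_pow (hv : Set.InjOn v s) {p : F[X]}
    (hp : p.degree < s.card) :
    ∑ i ∈ s, nodalWeight s v i * (p * X ^ (s.card - 1 - p.natDegree)).eval (v i) =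
      p.leadingCoeff := by
  rcases eq_or_ne p 0 with rfl | hp0
  · simp
  have hlt : p.natDegree < s.card := (natDegree_lt_iff_degree_lt hp0).2 hp
  have hsum : p.natDegree + (s.card - 1 - p.natDegree) = s.card - 1 := by omega
  have hdeg : (p * X ^ (s.card - 1 - p.natDegree)).degree < (s.card : WithBot ℕ) := by
    rw [degree_mul_X_pow, degree_eq_natDegree hp0, ← Nat.cast_add, hsum, Nat.cast_lt]
    omega
  rw [sum_nodalWeight_mul_eval hv hdeg, leadingCoeff,
    ← coeff_mul_X_pow p (s.card - 1 - p.natDegree) p.natDegree, hsum]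

theorem degree_lt_card_sub_iff_forall_sum_eq_zero (hv : Set.InjOn v s) {h : F[X]}
    (hh : h.degree < s.card) {k : ℕ} :
    h.degree < (s.card - k : ℕ) ↔
      ∀ f : F[X], f.degree < k → ∑ i ∈ s, nodalWeight s v i * (h * f).eval (v i) = 0 := by
  rcases eq_or_ne h 0 with rfl | hh0
  · simp
  rw [← natDegree_lt_iff_degree_lt hh0] at hh ⊢
  constructor
  · intro hhk f hf
    rcases eq_or_ne f 0 with rfl | hf0
    · simp
    rw [← natDegree_lt_iff_degree_lt hf0] at hf
    have hdeg : (h * f).natDegree < s.card - 1 := by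
      rw [natDegree_mul hh0 hf0]
      omega
    rw [sum_nodalWeight_mul_eval hv, coeff_eq_zero_of_natDegree_lt hdeg]
    exact (natDegree_lt_iff_degree_lt (mul_ne_zero hh0 hf0)).1 (by omega)
  · intro hsum
    by_contra hle
    have hdeg : (X ^ (s.card - 1 - h.natDegree) : F[X]).degree < k := by
      rw [degree_X_pow, Nat.cast_lt]
      omega
    have hlead := sum_nodalWeight_mul_eval_mul_X_pow hv ((natDegree_lt_iff_degree_lt hh0).1 hh)
    exact leadingCoeff_ne_zero.2 hh0 (hlead.symm.trans (hsum _ hdeg))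

end Nodes

section Codes

variable {R ι : Type*} [CommSemiring R]

/-- The generalized Reed–Solomon code with nodes `v`, column multipliers `w` and dimension
parameter `k`: all vectors `(w i * p (v i))_i` with `p` a polynomial of degree less than `k`. -/
noncomputable def generalizedReedSolomon (v w : ι → R) (k : ℕ) : Submodule R (ι → R) :=
  (degreeLT R k).map (LinearMap.pi fun i ↦ w i • leval (v i))

/-- The dual of a linear code: its orthogonal complement with respect to the dot product. -/
def dualCode [Fintype ι] (C : Submodule R (ι → R)) : Submodule R (ι → R) :=
  C.orthogonalBilin (dotProductBilin R R)

theorem mem_generalizedReedSolomon {v w : ι → R} {k : ℕ} {c : ι → R} :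
    c ∈ generalizedReedSolomon v w k ↔
      ∃ p : R[X], p.degree < k ∧ ∀ i, c i = w i * p.eval (v i) := by
  simp [generalizedReedSolomon, mem_degreeLT, funext_iff, eq_comm]

theorem mem_dualCode_generalizedReedSolomon [Fintype ι] {v w : ι → R} {k : ℕ} {c : ι → R} :
    c ∈ dualCode (generalizedReedSolomon v w k) ↔
      ∀ f : R[X], f.degree < k → ∑ i, w i * c i * f.eval (v i) = 0 := by
  simp [dualCode, generalizedReedSolomon, mem_degreeLT, dotProduct, mul_right_comm]

end Codes

section Duality

variable {F ι : Type*} [Field F]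

theorem generalizedReedSolomon_smul {a : F} (ha : a ≠ 0) (v w : ι → F) (k : ℕ) :
    generalizedReedSolomon v (a • w) k = generalizedReedSolomon v w k := by
  rw [generalizedReedSolomon, generalizedReedSolomon,
    ← Submodule.map_smul (LinearMap.pi fun i ↦ w i • leval (v i)) _ a ha]
  congr 1
  ext
  simp [mul_assoc]

variable [Fintype ι]

theorem generalizedReedSolomon_card {v w : ι → F} (hv : v.Injective) (hw : ∀ i, w i ≠ 0) :
    generalizedReedSolomon v w (Fintype.card ι) = ⊤ := by
  classical
  refine eq_top_iff.2 fun c _ ↦ mem_generalizedReedSolomon.2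
    ⟨interpolate Finset.univ v (c / w), degree_interpolate_lt _ hv.injOn, fun i ↦ ?_⟩
  rw [eval_interpolate_at_node _ hv.injOn (Finset.mem_univ i), Pi.div_apply,
    mul_div_cancel₀ _ (hw i)]

theorem dualCode_generalizedReedSolomon [DecidableEq ι] {v w : ι → F} (hv : v.Injective)
    (hw : ∀ i, w i ≠ 0) (k : ℕ) :
    dualCode (generalizedReedSolomon v w k) =
      generalizedReedSolomon v (nodalWeight Finset.univ v / w) (Fintype.card ι - k) := by
  have mem_dual_iff {h : F[X]} (hh : h.degree < Fintype.card ι) {c : ι → F}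
      (hc : ∀ i, c i = (nodalWeight Finset.univ v / w) i * h.eval (v i)) :
      c ∈ dualCode (generalizedReedSolomon v w k) ↔ h.degree < (Fintype.card ι - k : ℕ) := by
    have hwc (i : ι) : w i * c i = nodalWeight Finset.univ v i * h.eval (v i) := by
      rw [hc, Pi.div_apply, ← mul_assoc, mul_div_cancel₀ _ (hw i)]
    simp only [mem_dualCode_generalizedReedSolomon, hwc, mul_assoc, ← eval_mul]
    exact (degree_lt_card_sub_iff_forall_sum_eq_zero hv.injOn hh).symm
  have hweight (i : ι) : (nodalWeight Finset.univ v / w) i ≠ 0 :=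
    div_ne_zero (nodalWeight_ne_zero hv.injOn (Finset.mem_univ i)) (hw i)
  ext c
  constructor
  · intro hdual
    obtain ⟨h, hh, hc⟩ : ∃ h : F[X], h.degree < Fintype.card ι ∧
        ∀ i, c i = (nodalWeight Finset.univ v / w) i * h.eval (v i) := by
      rw [← mem_generalizedReedSolomon, generalizedReedSolomon_card hv hweight]
      trivial
    exact mem_generalizedReedSolomon.2 ⟨h, (mem_dual_iff hh hc).1 hdual, hc⟩
  · rw [mem_generalizedReedSolomon]
    rintro ⟨h, hh, hc⟩
    exact (mem_dual_iff (hh.trans_le (Nat.cast_le.2 (Nat.sub_le _ _))) hc).2 hh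

end Duality

section FiniteField

variable {F : Type*} [Field F] [Fintype F]

theorem nodal_univ_id : nodal Finset.univ (id : F → F) = X ^ Fintype.card F - X := by
  have hmonic : (X ^ Fintype.card F - X : F[X]).Monic :=
    monic_X_pow_sub (by simpa using Fintype.one_lt_card)
  have hroots := FiniteField.roots_X_pow_card_sub_X F
  have hcard : (X ^ Fintype.card F - X : F[X]).roots.card =
      (X ^ Fintype.card F - X : F[X]).natDegree := by
    rw [hroots, FiniteField.X_pow_card_sub_X_natDegree_eq F Fintype.one_lt_card]
    rfl
  rw [← prod_multiset_X_sub_C_of_monic_of_roots_card_eq hmonic hcard, hroots]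
  rfl

theorem nodalWeight_univ_id [DecidableEq F] (x : F) :
    nodalWeight Finset.univ (id : F → F) x = -1 := by
  simp [nodalWeight_eq_eval_derivative_nodal, nodal_univ_id, derivative_X_pow]

theorem dualCode_reedSolomon (k : ℕ) :
    dualCode (generalizedReedSolomon (id : F → F) 1 k) =
      generalizedReedSolomon id 1 (Fintype.card F - k) := by
  classical
  have hweight : nodalWeight Finset.univ (id : F → F) / 1 = (-1 : F) • 1 := by
    ext x
    simp [nodalWeight_univ_id]
  rw [dualCode_generalizedReedSolomon Function.injective_id (by simp), hweight,
    generalizedReedSolomon_smul (neg_ne_zero.2 one_ne_zero)]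

end FiniteField

theorem stmt_12 (q t k : ℕ) (hq : ∃ p m : ℕ, p.Prime ∧ 0 < m ∧ q = p ^ m) (ht : 1 ≤ t)
    (hk1 : 1 ≤ k) (hk : k ≤ q ^ t)
    (B F : Type) [Field B] [Fintype B] [Field F] [Fintype F] [Algebra B F]
    (hB : Fintype.card B = q) (hrank : Module.finrank B F = t)
    (hF : Fintype.card F = q ^ t)
    (c : F → F) :
    c ∈ WkSet B F k ↔
      ∃ h : Polynomial F, h.degree < ((q ^ t - k : ℕ) : WithBot ℕ) ∧
        h.eval 0 = 0 ∧
        (∀ α : F, α ≠ 0 → ∃ b : B, α * h.eval α = algebraMap B F b) ∧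
        ∀ α : F, c α = h.eval α := by
  have hdual : (∀ f : F[X], f.degree < k → ∑ α, c α * f.eval α = 0) ↔
      ∃ h : F[X], h.degree < (q ^ t - k : ℕ) ∧ ∀ α, c α = h.eval α := by
    simpa [hF, mem_generalizedReedSolomon, mem_dualCode_generalizedReedSolomon] using
      SetLike.ext_iff.1 (dualCode_reedSolomon (F := F) k) c
  rw [WkSet, Set.mem_ofPred_eq, hdual]
  constructor
  · rintro ⟨⟨h, hdeg, hc⟩, hzero, hB⟩
    simp only [hc] at hzero hB
    exact ⟨h, hdeg, hzero, hB, hc⟩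
  · rintro ⟨h, hdeg, hzero, hB, hc⟩
    simp only [hc]
    exact ⟨⟨h, hdeg, fun _ ↦ rfl⟩, hzero, hB⟩
end

section
/- Fix k with 1 ≤ k ≤ q^t, and suppose w_1, …, w_d ∈ W_k are linearly independent over B. Then there exists a set I ⊆ F \ {0} with |I| = d and coefficients M(α,β) ∈ B (for α ∈ I and β ∈ F \ ({0} ∪ I)) such that for every f ∈ F[X] with deg f < k and every α ∈ I: Tr(f(α)/α) = Σ_{β ∈ F \ ({0} ∪ I)} M(α,β) · Tr(f(β)/β). -/
/-!
Dividing out the scaling `α ↦ α⁻¹`, an element of `W_k` is a vector `v : F → B` with `v 0 = 0`, and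
taking traces of `∑ (v_α / α) f(α) = 0` turns it into a `B`-linear relation `∑ v_α Tr(f(α)/α) = 0`.
The span of the vectors `v` coming from `w_1, …, w_d` has a systematic basis: `d` positions `I` at
which its generator matrix is the identity. The basis vector belonging to `α ∈ I` expresses
`Tr(f(α)/α)` through the positions outside `I`.
-/

open Module Submodule

section SystematicBasis

variable {ι K : Type*} [Field K]

theorem exists_basis_coord_eq_of_span_eq_top {V : Type*} [AddCommGroup V] [Module K V]
    [FiniteDimensional K V] {L : ι → Dual K V} (hL : span K (Set.range L) = ⊤) :
    ∃ (s : Set ι) (b : Basis s K V), ∀ i : s, b.coord i = L i := by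
  classical
  obtain ⟨s, -, -, hspan, hli⟩ :=
    exists_linearIndepOn_extension (linearIndepOn_empty K L) (Set.empty_subset Set.univ)
  have hs : ⊤ ≤ span K (Set.range fun i : s ↦ L i) := by
    rw [← hL, span_le, ← Set.image_univ, ← Set.image_eq_range]
    exact hspan
  let bL : Basis s K (Dual K V) := Basis.mk hli hs
  have bL_apply (i : s) : bL i = L i := Basis.mk_apply hli hs i
  have : Finite s := Module.Finite.finite_basis bL
  let b : Basis s K V := bL.dualBasis.map (evalEquiv K V).symm
  refine ⟨s, b, fun i ↦ b.ext fun j ↦ ?_⟩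
  calc b.coord i (b j) = bL.dualBasis j (bL i) := by
        rw [b.coord_apply, b.repr_self, Finsupp.single_apply, bL.dualBasis_apply_self]
        simp only [eq_comm]
    _ = L i (b j) := by
        rw [Basis.map_apply, apply_evalEquiv_symm_apply, bL_apply]

theorem span_range_proj_domRestrict_eq_top (W : Submodule K (ι → K)) [FiniteDimensional K W] :
    span K (Set.range fun i ↦ (LinearMap.proj i).domRestrict W) = (⊤ : Submodule K (Dual K W)) := by
  refine span_eq_top_of_ne_zero fun v hv ↦ ?_
  obtain ⟨i, hi⟩ := Function.ne_iff.mp (Subtype.coe_ne_coe.mpr hv)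
  exact ⟨_, ⟨i, rfl⟩, hi⟩

theorem exists_systematic_basis (W : Submodule K (ι → K)) [FiniteDimensional K W] :
    ∃ (I : Finset ι) (b : Basis I K W), ∀ (v : W) (i : I), b.repr v i = (v : ι → K) i := by
  obtain ⟨s, b, hb⟩ := exists_basis_coord_eq_of_span_eq_top (span_range_proj_domRestrict_eq_top W)
  lift s to Finset ι using Module.Finite.finite_basis b
  exact ⟨s, b, fun v i ↦ LinearMap.congr_fun (hb i) v⟩

theorem exists_recovery_coefficients [Fintype ι] [DecidableEq ι] (W : Submodule K (ι → K)) :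
    ∃ I : Finset ι, I.card = finrank K W ∧ (∀ i ∈ I, ∃ v ∈ W, v i ≠ 0) ∧
      ∃ M : ι → ι → K, ∀ x : ι → K, (∀ v ∈ W, v ⬝ᵥ x = 0) →
        ∀ i ∈ I, x i = ∑ j ∈ Iᶜ, M i j * x j := by
  obtain ⟨I, b, hb⟩ := exists_systematic_basis W
  have b_apply (i j : I) : (b i : ι → K) j = if i = j then 1 else 0 := by
    rw [← hb, b.repr_self, Finsupp.single_apply]
  refine ⟨I, by simp [finrank_eq_card_basis b],
    fun i hi ↦ ⟨b ⟨i, hi⟩, (b _).2, by simp [b_apply ⟨i, hi⟩ ⟨i, hi⟩]⟩,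
    fun i j ↦ if hi : i ∈ I then -(b ⟨i, hi⟩ : ι → K) j else 0, fun x hx i hi ↦ ?_⟩
  have sum_mem : ∑ j ∈ I, (b ⟨i, hi⟩ : ι → K) j * x j = x i := by
    rw [← Finset.sum_coe_sort]
    simp [b_apply]
  have sum_univ : ∑ j, (b ⟨i, hi⟩ : ι → K) j * x j = 0 := hx _ (b _).2
  rw [← Finset.sum_add_sum_compl I, sum_mem] at sum_univ
  simpa [hi] using eq_neg_of_add_eq_zero_left sum_univ

theorem exists_recovery_coefficients_of_linearIndependent [Fintype ι] [DecidableEq ι] {n : Type*}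
    [Fintype n] {v : n → ι → K} (hv : LinearIndependent K v) :
    ∃ I : Finset ι, I.card = Fintype.card n ∧ (∀ i ∈ I, ∃ a, v a i ≠ 0) ∧
      ∃ M : ι → ι → K, ∀ x : ι → K, (∀ a, v a ⬝ᵥ x = 0) →
        ∀ i ∈ I, x i = ∑ j ∈ Iᶜ, M i j * x j := by
  obtain ⟨I, hI, hne, M, hM⟩ := exists_recovery_coefficients (span K (Set.range v))
  refine ⟨I, hI.trans (finrank_span_eq_card hv), fun i hi ↦ ?_, M, fun x hx ↦ hM x ?_⟩
  · by_contra! hzero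
    have span_le_ker : span K (Set.range v) ≤ LinearMap.ker (LinearMap.proj i) :=
      span_le.mpr (Set.range_subset_iff.mpr hzero)
    obtain ⟨u, hu, hui⟩ := hne i hi
    exact hui (span_le_ker hu)
  · have span_le_ker : span K (Set.range v) ≤ LinearMap.ker ((dotProductBilin K K).flip x) :=
      span_le.mpr (Set.range_subset_iff.mpr hx)
    exact fun u hu ↦ span_le_ker hu

end SystematicBasis

section Scaling

/-- The `B`-linear map `v ↦ (v_α / α)_α`. For a field `B` it identifies the vectors `v : F → B` with
`v_0 = 0` with the vectors `c : F → F` such that `c_0 = 0` and `α · c_α ∈ B` for all `α`. The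
coordinate at `0` is sent to `0` because `0⁻¹ = 0`. -/
def smulInv (B F : Type*) [CommSemiring B] [Field F] [Algebra B F] : (F → B) →ₗ[B] (F → F) :=
  LinearMap.piMap fun α ↦ LinearMap.toSpanSingleton B F α⁻¹

variable {B F : Type*} [CommSemiring B] [Field F] [Algebra B F]

theorem smulInv_apply (v : F → B) (α : F) : smulInv B F v α = v α • α⁻¹ :=
  rfl

theorem dotProduct_map_div_eq_zero [Fintype F] (τ : F →ₗ[B] B) {v : F → B} {x : F → F}
    (h : smulInv B F v ⬝ᵥ x = 0) : v ⬝ᵥ (fun α ↦ τ (x α / α)) = 0 :=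
  calc v ⬝ᵥ (fun α ↦ τ (x α / α)) = τ (smulInv B F v ⬝ᵥ x) := by
        simp only [dotProduct, map_sum, smulInv_apply, smul_mul_assoc, map_smul, smul_eq_mul,
          div_eq_inv_mul]
    _ = 0 := by rw [h, map_zero]

theorem exists_smulInv_eq {c : F → F} (hc0 : c 0 = 0)
    (hcB : ∀ α : F, α ≠ 0 → ∃ b : B, α * c α = algebraMap B F b) :
    ∃ v : F → B, v 0 = 0 ∧ smulInv B F v = c := by
  have exists_coeff (α : F) : ∃ b : B, (α = 0 → b = 0) ∧ b • α⁻¹ = c α := by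
    rcases eq_or_ne α 0 with rfl | hα
    · exact ⟨0, fun _ ↦ rfl, by rw [zero_smul, hc0]⟩
    · obtain ⟨b, hb⟩ := hcB α hα
      refine ⟨b, fun h ↦ absurd h hα, ?_⟩
      rw [Algebra.smul_def, ← hb, mul_comm, inv_mul_cancel_left₀ hα]
  choose v hv0 hv using exists_coeff
  exact ⟨v, hv0 0 rfl, funext hv⟩

end Scaling

theorem stmt_13 (q t k d : ℕ) (hq : ∃ p m : ℕ, p.Prime ∧ 0 < m ∧ q = p ^ m) (ht : 1 ≤ t)
    (hk1 : 1 ≤ k) (hk : k ≤ q ^ t)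
    (B F : Type) [Field B] [Fintype B] [Field F] [Fintype F] [DecidableEq F] [Algebra B F]
    (hB : Fintype.card B = q) (hrank : Module.finrank B F = t)
    (hF : Fintype.card F = q ^ t)
    (w : Fin d → (F → F)) (hw : ∀ i, w i ∈ WkSet B F k)
    (hli : LinearIndependent B w) :
    ∃ I : Finset F, (0 : F) ∉ I ∧ I.card = d ∧
      ∃ M : F → F → B,
        ∀ f : Polynomial F, f.degree < (k : WithBot ℕ) →
          ∀ α ∈ I,
            Algebra.trace B F (f.eval α / α) =
              ∑ β ∈ Finset.univ \ insert (0 : F) I,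
                M α β * Algebra.trace B F (f.eval β / β) := by
  choose v hv0 hvw using fun i ↦ exists_smulInv_eq (hw i).2.1 (hw i).2.2
  obtain rfl : smulInv B F ∘ v = w := funext hvw
  obtain ⟨I, hcard, hne, M, hM⟩ := exists_recovery_coefficients_of_linearIndependent hli.of_comp
  have zero_notMem : (0 : F) ∉ I := fun h ↦ (hne 0 h).elim fun i hi ↦ hi (hv0 i)
  refine ⟨I, zero_notMem, by rw [hcard, Fintype.card_fin], M, fun f hf α hα ↦ ?_⟩
  have trace_relation (i : Fin d) : v i ⬝ᵥ (fun β ↦ Algebra.trace B F (f.eval β / β)) = 0 :=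
    dotProduct_map_div_eq_zero (Algebra.trace B F) ((hw i).1 f hf)
  rw [hM _ trace_relation α hα, Finset.sdiff_insert, ← Finset.compl_eq_univ_sdiff,
    Finset.sum_erase _ (by rw [div_zero, map_zero, mul_zero])]
end
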